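/- Minimizers ρ_ε* of E_ε converge narrowly (along a subsequence) as ε → 0 to a minimizer ρ* of E, which is supported in M; moreover the convergence holds in the 2-Wasserstein distance. -/

import Mathlib

open Metric MeasureTheory Filter Topology

noncomputable section

/-- Squared 2-Wasserstein distance, as the infimum of the quadratic transport cost
over couplings. -/
def W2sq {E : Type*} [MeasurableSpace E] [PseudoMetricSpace E]
    (μ ν : Measure E) : ℝ :=
  sInf ((fun π : Measure (E × E) => ∫ p, dist p.1 p.2 ^ 2 ∂π) ''
    {π | IsProbabilityMeasure π ∧ π.map Prod.fst = μ ∧ π.map Prod.snd = ν})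

variable {d : ℕ}

/-- The ε-interaction energy. -/
def Eeps (M : Set (EuclideanSpace ℝ (Fin d))) (W : EuclideanSpace ℝ (Fin d) → ℝ)
    (ε : ℝ) (ρ : Measure (EuclideanSpace ℝ (Fin d))) : ℝ :=
  (1 / 2) * ∫ x, ∫ y, W (x - y) ∂ρ ∂ρ + (1 / ε) * ∫ x, infDist x M ^ 2 ∂ρ

/-- The interaction energy. -/
def Eint (W : EuclideanSpace ℝ (Fin d) → ℝ) (ρ : Measure (EuclideanSpace ℝ (Fin d))) : ℝ :=
  (1 / 2) * ∫ x, ∫ y, W (x - y) ∂ρ ∂ρ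

open scoped ENNReal NNReal

lemma couple_ext {E : Type*} [MeasurableSpace E] (μ ν : Measure E) [IsProbabilityMeasure μ]
    [IsProbabilityMeasure ν] (π0 : Measure (E × E))
    (h1 : π0.map Prod.fst ≤ μ) (h2 : π0.map Prod.snd ≤ ν) :
    ∃ π' : Measure (E × E), (π0 + π').map Prod.fst = μ ∧ (π0 + π').map Prod.snd = ν ∧
      π' Set.univ = 1 - π0 Set.univ ∧ π'.map Prod.fst ≤ μ ∧ π'.map Prod.snd ≤ ν := by
  have hf : IsFiniteMeasure (π0.map Prod.fst) := isFiniteMeasure_of_le μ h1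
  have hs : IsFiniteMeasure (π0.map Prod.snd) := isFiniteMeasure_of_le ν h2
  set μ' := μ - π0.map Prod.fst with hμ'
  set ν' := ν - π0.map Prod.snd with hν'
  set r := 1 - π0 Set.univ with hr
  have hm : μ' Set.univ = r := by
    rw [hμ', Measure.sub_apply MeasurableSet.univ h1, Measure.map_apply measurable_fst .univ]
    simp [hr]
  have hn : ν' Set.univ = r := by
    rw [hν', Measure.sub_apply MeasurableSet.univ h2, Measure.map_apply measurable_snd .univ]
    simp [hr]
  have hrt : r ≠ ⊤ := by rw [← hm]; exact measure_ne_top _ _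
  have e1 : (r⁻¹ • (μ'.prod ν')).map Prod.fst = μ' := by
    rw [Measure.map_smul, Measure.map_fst_prod, hn, smul_smul]
    by_cases h : r = 0
    · rw [h, Measure.measure_univ_eq_zero] at hm
      simp [hm]
    · rw [ENNReal.inv_mul_cancel h hrt, one_smul]
  have e2 : (r⁻¹ • (μ'.prod ν')).map Prod.snd = ν' := by
    rw [Measure.map_smul, Measure.map_snd_prod, hm, smul_smul]
    by_cases h : r = 0
    · rw [h, Measure.measure_univ_eq_zero] at hn
      simp [hn]
    · rw [ENNReal.inv_mul_cancel h hrt, one_smul]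
  refine ⟨r⁻¹ • (μ'.prod ν'), ?_, ?_, ?_, ?_, ?_⟩
  · rw [Measure.map_add _ _ measurable_fst, e1, add_comm, hμ', Measure.sub_add_cancel_of_le h1]
  · rw [Measure.map_add _ _ measurable_snd, e2, add_comm, hν', Measure.sub_add_cancel_of_le h2]
  · have := congrArg (fun m => m Set.univ) e1
    simp only [Measure.map_apply measurable_fst .univ, Set.preimage_univ] at this
    rw [this, hm]
  · rw [e1]; exact Measure.sub_le
  · rw [e2]; exact Measure.sub_le

lemma block {E : Type*} [MeasurableSpace E] [PseudoMetricSpace E] [OpensMeasurableSpace E]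
    {ι : Type*} [Fintype ι] (μ ν : Measure E) [IsProbabilityMeasure μ]
    [IsProbabilityMeasure ν] (φ : ι → E → ℝ≥0∞) (hφ : ∀ i, Measurable (φ i))
    (hsum : ∀ x, ∑ i, φ i x ≤ 1) (δ : ℝ) 
    (hδ : ∀ i x y, φ i x ≠ 0 → φ i y ≠ 0 → dist x y ≤ δ) :
    ∃ π0 : Measure (E × E), π0.map Prod.fst ≤ μ ∧ π0.map Prod.snd ≤ ν ∧
      π0 Set.univ = ∑ i, min (∫⁻ x, φ i x ∂μ) (∫⁻ x, φ i x ∂ν) ∧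
      ∀ᵐ p ∂π0, dist p.1 p.2 ≤ δ := by
  have hle : ∀ (μ : Measure E) [IsProbabilityMeasure μ] (i : ι), ∫⁻ x, φ i x ∂μ ≠ ⊤ := by
    intro μ _ i
    refine ne_top_of_le_ne_top ENNReal.one_ne_top ?_
    calc ∫⁻ x, φ i x ∂μ ≤ ∫⁻ x, 1 ∂μ := lintegral_mono fun x =>
          (Finset.single_le_sum (f := fun i => φ i x) (fun _ _ => zero_le) (Finset.mem_univ i)).trans (hsum x)
      _ = 1 := by simp
  set a := fun i => ∫⁻ x, φ i x ∂μ with ha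
  set b := fun i => ∫⁻ x, φ i x ∂ν with hb
  have hfa : ∀ i, IsFiniteMeasure (μ.withDensity (φ i)) := fun i =>
    isFiniteMeasure_withDensity (hle μ i)
  have hfb : ∀ i, IsFiniteMeasure (ν.withDensity (φ i)) := fun i =>
    isFiniteMeasure_withDensity (hle ν i)
  have hua : ∀ i, μ.withDensity (φ i) Set.univ = a i := fun i => by
    simp [withDensity_apply, ha]
  have hub : ∀ i, ν.withDensity (φ i) Set.univ = b i := fun i => by
    simp [withDensity_apply, hb]
  have hsumle : ∀ (μ : Measure E), ∑ i, μ.withDensity (φ i) ≤ μ := by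
    intro μ
    refine Measure.le_iff.2 fun s hs => ?_
    rw [Measure.finsetSum_apply]
    simp only [withDensity_apply _ hs]
    rw [← lintegral_finsetSum _ (fun i _ => hφ i)]
    calc _ ≤ ∫⁻ x in s, 1 ∂μ := lintegral_mono hsum
      _ = _ := by simp
  set c := fun i => min (a i) (b i) / (a i * b i) with hc
  have hcb : ∀ i, c i * b i ≤ 1 := by
    intro i
    by_cases h0 : b i = 0
    · simp [h0]
    by_cases h1 : a i = 0
    · simp [h1, hc]
    simp only [hc, div_eq_mul_inv]
    rw [ENNReal.mul_inv (Or.inl h1) (Or.inr h0), mul_assoc, mul_assoc,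
      ENNReal.inv_mul_cancel h0 (hle ν i), mul_one, ← div_eq_mul_inv]
    exact ENNReal.div_le_of_le_mul (by simp)
  have hca : ∀ i, c i * a i ≤ 1 := by
    intro i
    by_cases h0 : b i = 0
    · simp [h0, hc]
    by_cases h1 : a i = 0
    · simp [h1]
    simp only [hc, div_eq_mul_inv]
    rw [ENNReal.mul_inv (Or.inl h1) (Or.inr h0), mul_comm (a i)⁻¹, mul_assoc, mul_assoc,
      ENNReal.inv_mul_cancel h1 (hle μ i), mul_one, ← div_eq_mul_inv]
    exact ENNReal.div_le_of_le_mul (by simp)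
  have hcab : ∀ i, c i * (a i * b i) = min (a i) (b i) := by
    intro i
    by_cases h0 : b i = 0
    · simp [h0]
    by_cases h1 : a i = 0
    · simp [h1]
    exact ENNReal.div_mul_cancel (mul_ne_zero h1 h0) (ENNReal.mul_ne_top (hle μ i) (hle ν i))
  refine ⟨∑ i, c i • (μ.withDensity (φ i)).prod (ν.withDensity (φ i)), ?_, ?_, ?_, ?_⟩
  · refine le_trans ?_ (hsumle μ)
    refine Measure.le_iff.2 fun s hs => ?_
    rw [Measure.map_apply measurable_fst hs, Measure.finsetSum_apply, Measure.finsetSum_apply]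
    refine Finset.sum_le_sum fun i _ => ?_
    rw [Measure.smul_apply, ← Measure.map_apply measurable_fst hs, Measure.map_fst_prod,
      Measure.smul_apply, hub, smul_smul, smul_eq_mul]
    exact mul_le_of_le_one_left' (hcb i)
  · refine le_trans ?_ (hsumle ν)
    refine Measure.le_iff.2 fun s hs => ?_
    rw [Measure.map_apply measurable_snd hs, Measure.finsetSum_apply, Measure.finsetSum_apply]
    refine Finset.sum_le_sum fun i _ => ?_
    rw [Measure.smul_apply, ← Measure.map_apply measurable_snd hs, Measure.map_snd_prod,
      Measure.smul_apply, hua, smul_smul, smul_eq_mul]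
    exact mul_le_of_le_one_left' (hca i)
  · rw [Measure.finsetSum_apply]
    refine Finset.sum_congr rfl fun i _ => ?_
    rw [Measure.smul_apply, ← Set.univ_prod_univ, Measure.prod_prod, hua, hub, smul_eq_mul, hcab]
  · rw [ae_iff, Measure.finsetSum_apply]
    refine Finset.sum_eq_zero fun i _ => ?_
    have hz : ∀ (μ : Measure E), ∀ᵐ x ∂(μ.withDensity (φ i)), φ i x ≠ 0 := by
      intro μ
      rw [ae_withDensity_iff (hφ i)]
      exact Eventually.of_forall fun x hx => hx
    have h1 := Measure.quasiMeasurePreserving_fst.ae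
      (μa := (μ.withDensity (φ i)).prod (ν.withDensity (φ i))) (hz μ)
    have h2 := Measure.quasiMeasurePreserving_snd.ae
      (μa := (μ.withDensity (φ i)).prod (ν.withDensity (φ i))) (hz ν)
    have h3 : ∀ᵐ p ∂((μ.withDensity (φ i)).prod (ν.withDensity (φ i))), dist p.1 p.2 ≤ δ := by
      filter_upwards [h1, h2] with p hp1 hp2 using hδ i _ _ hp1 hp2
    rw [Measure.smul_apply, ae_iff.1 h3, smul_zero]

lemma W2sq_le {E : Type*} [MeasurableSpace E] [PseudoMetricSpace E] [BorelSpace E]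
    [SecondCountableTopology E]
    {ι : Type*} [Fintype ι] (μ ν : Measure E) [IsProbabilityMeasure μ]
    [IsProbabilityMeasure ν] (φ : ι → E → ℝ≥0∞) (hφ : ∀ i, Measurable (φ i))
    (hsum : ∀ x, ∑ i, φ i x ≤ 1) (δ : ℝ) 
    (hδ : ∀ i x y, φ i x ≠ 0 → φ i y ≠ 0 → dist x y ≤ δ)
    (M : Set E) (hM : IsCompact M) (hMne : M.Nonempty) (hν : ν Mᶜ = 0) :
    ENNReal.ofReal (W2sq μ ν) ≤ ENNReal.ofReal (δ ^ 2) +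
      (∫⁻ x, ENNReal.ofReal (2 * infDist x M ^ 2) ∂μ + ENNReal.ofReal (2 * diam M ^ 2) *
        (1 - ∑ i, min (∫⁻ x, φ i x ∂μ) (∫⁻ x, φ i x ∂ν))) := by
  obtain ⟨π0, h1, h2, h3, h4⟩ := block μ ν φ hφ hsum δ hδ
  obtain ⟨π', e1, e2, e3, e4, e5⟩ := couple_ext μ ν π0 h1 h2
  have hprob : IsProbabilityMeasure (π0 + π') := by
    constructor
    rw [← Set.preimage_univ (f := Prod.fst), ← Measure.map_apply measurable_fst .univ, e1]
    simp
  have hW : W2sq μ ν ≤ ∫ p, dist p.1 p.2 ^ 2 ∂(π0 + π') := by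
    refine csInf_le ⟨0, ?_⟩ ⟨π0 + π', ⟨hprob, e1, e2⟩, rfl⟩
    rintro _ ⟨π, -, rfl⟩
    exact integral_nonneg fun p => by positivity
  have hfin : ∫ p, dist p.1 p.2 ^ 2 ∂(π0 + π') =
      (∫⁻ p, ENNReal.ofReal (dist p.1 p.2 ^ 2) ∂(π0 + π')).toReal :=
    integral_eq_lintegral_of_nonneg_ae (Eventually.of_forall fun p => by positivity)
      (by fun_prop)
  calc ENNReal.ofReal (W2sq μ ν) ≤ _ := ENNReal.ofReal_le_ofReal hW
    _ ≤ ∫⁻ p, ENNReal.ofReal (dist p.1 p.2 ^ 2) ∂(π0 + π') := by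
      rw [hfin]; exact ENNReal.ofReal_toReal_le
    _ = ∫⁻ p, ENNReal.ofReal (dist p.1 p.2 ^ 2) ∂π0 +
      ∫⁻ p, ENNReal.ofReal (dist p.1 p.2 ^ 2) ∂π' := lintegral_add_measure _ _ _
    _ ≤ _ := by
      gcongr
      · calc _ ≤ ∫⁻ p, ENNReal.ofReal (δ ^ 2) ∂π0 := by
              refine lintegral_mono_ae ?_
              filter_upwards [h4] with p hp
              gcongr
          _ ≤ _ := by
            rw [lintegral_const]
            refine mul_le_of_le_one_right' ?_
            rw [← Set.preimage_univ (f := Prod.fst), ← Measure.map_apply measurable_fst .univ]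
            exact (h1 _).trans (by simp)
      · have hM' : ∀ᵐ p ∂π', p.2 ∈ M := by
          have : ∀ᵐ y ∂(π'.map Prod.snd), y ∈ M :=
            (Measure.absolutelyContinuous_of_le e5) hν
          exact ae_of_ae_map measurable_snd.aemeasurable this
        calc _ ≤ ∫⁻ p, (ENNReal.ofReal (2 * infDist p.1 M ^ 2) +
                  ENNReal.ofReal (2 * diam M ^ 2)) ∂π' := by
              refine lintegral_mono_ae ?_
              filter_upwards [hM'] with p hp
              rw [← ENNReal.ofReal_add (by positivity) (by positivity)]
              refine ENNReal.ofReal_le_ofReal ?_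
              obtain ⟨z, hz, hz2⟩ := hM.exists_infDist_eq_dist hMne p.1
              have t1 := dist_triangle p.1 z p.2
              have t2 := dist_le_diam_of_mem hM.isBounded hz hp
              rw [hz2]
              have : dist p.1 p.2 ≤ dist p.1 z + diam M := by linarith
              nlinarith [pow_le_pow_left₀ dist_nonneg this 2,
                sq_nonneg (dist p.1 z - diam M)]
          _ = ∫⁻ p, ENNReal.ofReal (2 * infDist p.1 M ^ 2) ∂π' +
                  ENNReal.ofReal (2 * diam M ^ 2) * π' Set.univ := by
              rw [lintegral_add_right _ measurable_const, lintegral_const]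
          _ ≤ _ := by
              rw [e3, h3]
              gcongr
              have hm : Measurable fun x : E => ENNReal.ofReal (2 * infDist x M ^ 2) := by
                have := (continuous_infDist_pt M).measurable
                fun_prop
              rw [← lintegral_map hm measurable_fst]
              exact lintegral_mono' e4 le_rfl

lemma W2sq_tendsto {E : Type*} [MeasurableSpace E] [MetricSpace E] [BorelSpace E]
    [SecondCountableTopology E] (μ : ℕ → ProbabilityMeasure E) (ν : ProbabilityMeasure E)
    (h : Tendsto μ atTop (𝓝 ν)) 
    (M : Set E) (hM : IsCompact M) (hMne : M.Nonempty) (hν : (ν : Measure E) Mᶜ = 0)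
    (hd : Tendsto (fun n => ∫⁻ x, ENNReal.ofReal (2 * infDist x M ^ 2) ∂(μ n : Measure E)) atTop
      (𝓝 0)) :
    Tendsto (fun n => W2sq (μ n : Measure E) ν) atTop (𝓝 0) := by
  have hnn : ∀ n, 0 ≤ W2sq (μ n : Measure E) ν := fun n => by
    refine Real.sInf_nonneg ?_
    rintro _ ⟨π, -, rfl⟩
    exact integral_nonneg fun p => by positivity
  have key : ∀ δ : ℝ, 0 < δ → ∃ u : ℕ → ℝ≥0∞, Tendsto u atTop (𝓝 (ENNReal.ofReal (δ ^ 2))) ∧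
      ∀ n, ENNReal.ofReal (W2sq (μ n : Measure E) ν) ≤ u n := by
    intro δ hδ
    obtain ⟨t, ht, hcov⟩ := hM.finite_cover_balls (half_pos hδ)
    obtain ⟨ht, hcov⟩ := hcov
    have := ht.fintype
    obtain ⟨f, hf⟩ := PartitionOfUnity.exists_isSubordinate hM.isClosed
      (fun i : t => ball (i : E) (δ / 2)) (fun i => isOpen_ball) (by
        simpa [Set.iUnion_subtype] using hcov)
    let g : t → BoundedContinuousFunction E ℝ≥0 := fun i =>
      BoundedContinuousFunction.mkOfBound ⟨fun x => (f i x).toNNReal, by fun_prop⟩ 1 (by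
        intro x y
        rw [NNReal.dist_eq]
        have a1 := f.nonneg i x
        have a2 := f.nonneg i y
        have a3 := f.le_one i x
        have a4 := f.le_one i y
        simp only [ContinuousMap.coe_mk, Real.coe_toNNReal _ a1, Real.coe_toNNReal _ a2]
        rw [abs_le]; constructor <;> linarith)
    have hg : ∀ i x, ((g i x : ℝ≥0) : ℝ) = f i x := fun i x =>
      Real.coe_toNNReal _ (f.nonneg i x)
    have hs1 : ∀ x, ∑ i, (g i x : ℝ≥0∞) ≤ 1 := by
      intro x
      have := f.sum_le_one x
      rw [finsum_eq_sum_of_fintype] at this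
      simp only [← hg] at this
      exact_mod_cast this
    have hs2 : ∀ x ∈ M, ∑ i, (g i x : ℝ≥0∞) = 1 := by
      intro x hx
      have := f.sum_eq_one hx
      rw [finsum_eq_sum_of_fintype] at this
      simp only [← hg] at this
      exact_mod_cast this
    have hgm : ∀ i, Measurable fun x => (g i x : ℝ≥0∞) := fun i => by
      have := (g i).continuous.measurable
      fun_prop
    have hsν : ∑ i, ∫⁻ x, (g i x : ℝ≥0∞) ∂(ν : Measure E) = 1 := by
      rw [← lintegral_finsetSum _ (fun i _ => hgm i)]
      calc _ = ∫⁻ x, 1 ∂(ν : Measure E) := by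
            refine lintegral_congr_ae ?_
            have : ∀ᵐ x ∂(ν : Measure E), x ∈ M := hν
            filter_upwards [this] with x hx using hs2 x hx
        _ = 1 := by simp
    refine ⟨_, ?_, fun n => W2sq_le (μ n : Measure E) ν (fun i x => (g i x : ℝ≥0∞)) hgm hs1 δ
      ?_ M hM hMne hν⟩
    · have hlim : Tendsto (fun n => ∑ i, min (∫⁻ x, (g i x : ℝ≥0∞) ∂(μ n : Measure E))
          (∫⁻ x, (g i x : ℝ≥0∞) ∂(ν : Measure E))) atTop (𝓝 1) := by
        rw [← hsν]
        refine tendsto_finsetSum _ fun i _ => ?_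
        have h0 := ProbabilityMeasure.tendsto_iff_forall_lintegral_tendsto.1 h (g i)
        simpa using h0.min (tendsto_const_nhds (x := ∫⁻ x, (g i x : ℝ≥0∞) ∂(ν : Measure E)))
      have h1 := ENNReal.Tendsto.sub (tendsto_const_nhds (x := (1 : ℝ≥0∞))) hlim
        (Or.inl ENNReal.one_ne_top)
      rw [tsub_self] at h1
      have h2 := ENNReal.Tendsto.const_mul (a := ENNReal.ofReal (2 * diam M ^ 2)) h1
        (Or.inr ENNReal.ofReal_ne_top)
      have h3 := (tendsto_const_nhds (x := ENNReal.ofReal (δ ^ 2))).add (hd.add h2)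
      simpa using h3
    · intro i x y hx hy
      have hh : ∀ x, (g i x : ℝ≥0∞) ≠ 0 → dist x i < δ / 2 := by
        intro x hx
        have : f i x ≠ 0 := by
          rw [← hg]; exact_mod_cast hx
        exact hf i (subset_tsupport _ this)
      have := dist_triangle_right x y i
      linarith [hh x hx, hh y hy]
  have hE : Tendsto (fun n => ENNReal.ofReal (W2sq (μ n : Measure E) ν)) atTop (𝓝 0) := by
    rw [ENNReal.tendsto_nhds_zero]
    intro η hη
    obtain ⟨δ, hδ, hδη⟩ : ∃ δ : ℝ, 0 < δ ∧ ENNReal.ofReal (δ ^ 2) < η := by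
      have : Tendsto (fun δ : ℝ => ENNReal.ofReal (δ ^ 2)) (𝓝[>] 0) (𝓝 0) := by
        have hc : Continuous (fun δ : ℝ => ENNReal.ofReal (δ ^ 2)) :=
          ENNReal.continuous_ofReal.comp (by fun_prop)
        have := hc.tendsto 0
        simp only [ne_eq, OfNat.ofNat_ne_zero, not_false_eq_true, zero_pow,
          ENNReal.ofReal_zero] at this
        exact this.mono_left nhdsWithin_le_nhds
      obtain ⟨δ, h1, h2⟩ := ((this.eventually (gt_mem_nhds hη)).and self_mem_nhdsWithin).exists
      exact ⟨δ, h2, h1⟩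
    obtain ⟨u, hu, hle⟩ := key δ hδ
    filter_upwards [hu.eventually (gt_mem_nhds hδη)] with n hn
    exact (hle n).trans hn.le
  have := (ENNReal.tendsto_toReal ENNReal.zero_ne_top).comp hE
  simpa [Function.comp_def, ENNReal.toReal_ofReal (hnn _)] using this

/-- Minimizers ρ_ε* of E_ε converge narrowly along a subsequence, and in 2-Wasserstein
distance, as ε → 0 to a minimizer ρ* of E supported in M. -/
theorem stmt6 (M : Set (EuclideanSpace ℝ (Fin d))) (hMne : M.Nonempty) (hMc : IsCompact M)
    (W : EuclideanSpace ℝ (Fin d) → ℝ) (hWc : Continuous W) (hW0 : ∀ x, 0 ≤ W x)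
    (hWsymm : ∀ x, W (-x) = W x) (hWgrowth : ∃ C, ∀ x, W x ≤ C * (1 + ‖x‖ ^ 2))
    (ρmin : ℝ → Measure (EuclideanSpace ℝ (Fin d)))
    (hmin : ∀ ε, 0 < ε →
      IsProbabilityMeasure (ρmin ε) ∧ Integrable (fun x => ‖x‖ ^ 2) (ρmin ε) ∧
      ∀ ρ : Measure (EuclideanSpace ℝ (Fin d)),
        IsProbabilityMeasure ρ → Integrable (fun x => ‖x‖ ^ 2) ρ →
        Eeps M W ε (ρmin ε) ≤ Eeps M W ε ρ) :
    ∃ εseq : ℕ → ℝ, (∀ n, 0 < εseq n) ∧ Tendsto εseq atTop (𝓝 0) ∧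
      ∃ ρstar : Measure (EuclideanSpace ℝ (Fin d)),
        IsProbabilityMeasure ρstar ∧ ρstar Mᶜ = 0 ∧
        (∀ ν : Measure (EuclideanSpace ℝ (Fin d)),
          IsProbabilityMeasure ν → ν Mᶜ = 0 → Eint W ρstar ≤ Eint W ν) ∧
        (∀ f : EuclideanSpace ℝ (Fin d) → ℝ, Continuous f → (∃ C, ∀ x, |f x| ≤ C) →
          Tendsto (fun n => ∫ x, f x ∂(ρmin (εseq n))) atTop (𝓝 (∫ x, f x ∂ρstar))) ∧
        Tendsto (fun n => W2sq (ρmin (εseq n)) ρstar) atTop (𝓝 0) := by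
  have hfin : ∀ ν : Measure (EuclideanSpace ℝ (Fin d)), IsProbabilityMeasure ν → ν Mᶜ = 0 →
      Integrable (fun x => ‖x‖ ^ 2) ν ∧ ∀ ε, Eeps M W ε ν = Eint W ν := by
    intro ν hν hνM
    have hae : ∀ᵐ x ∂ν, x ∈ M := hνM
    obtain ⟨R, hR⟩ := hMc.isBounded.exists_norm_le
    refine ⟨?_, fun ε => ?_⟩
    · refine Integrable.of_bound (by fun_prop) (R ^ 2) ?_
      filter_upwards [hae] with x hx
      rw [norm_pow, norm_norm]
      exact pow_le_pow_left₀ (norm_nonneg _) (hR x hx) 2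
    · have : ∫ x, infDist x M ^ 2 ∂ν = 0 := by
        refine integral_eq_zero_of_ae ?_
        filter_upwards [hae] with x hx
        simp [infDist_zero_of_mem hx]
      simp [Eeps, Eint, this]
  have hWint : ∀ ν : Measure (EuclideanSpace ℝ (Fin d)), IsProbabilityMeasure ν →
      Integrable (fun x => ‖x‖ ^ 2) ν →
      Integrable (fun p : _ × _ => W (p.1 - p.2)) (ν.prod ν) := by
    intro ν hν hi
    obtain ⟨C, hC⟩ := hWgrowth
    have hC0 : 0 ≤ C := by simpa using (hW0 0).trans (hC 0)
    have hb : Integrable (fun p : EuclideanSpace ℝ (Fin d) × EuclideanSpace ℝ (Fin d) =>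
        C * (1 + (2 * ‖p.1‖ ^ 2 + 2 * ‖p.2‖ ^ 2))) (ν.prod ν) :=
      (((integrable_const 1).add (((hi.comp_fst ν).const_mul 2).add
        ((hi.comp_snd ν).const_mul 2))).const_mul C)
    refine hb.mono' (by fun_prop) (Eventually.of_forall fun p => ?_)
    rw [Real.norm_of_nonneg (hW0 _)]
    refine (hC _).trans ?_
    gcongr
    have := norm_sub_le p.1 p.2
    nlinarith [pow_le_pow_left₀ (norm_nonneg _) this 2, sq_nonneg (‖p.1‖ - ‖p.2‖)]
  have hEnn : ∀ ν : Measure (EuclideanSpace ℝ (Fin d)), 0 ≤ Eint W ν := fun ν =>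
    mul_nonneg (by norm_num) (integral_nonneg fun x => integral_nonneg fun y => hW0 _)
  have hdnn : ∀ ν : Measure (EuclideanSpace ℝ (Fin d)), 0 ≤ ∫ x, infDist x M ^ 2 ∂ν := fun ν =>
    integral_nonneg fun x => by positivity
  have hdecomp : ∀ ε ν, Eeps M W ε ν = Eint W ν + (1 / ε) * ∫ x, infDist x M ^ 2 ∂ν :=
    fun ε ν => rfl
  have hcmp : ∀ ε, 0 < ε → ∀ ν : Measure (EuclideanSpace ℝ (Fin d)), IsProbabilityMeasure ν →
      ν Mᶜ = 0 → Eint W (ρmin ε) + (1 / ε) * ∫ x, infDist x M ^ 2 ∂(ρmin ε) ≤ Eint W ν := by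
    intro ε hε ν hν hνM
    rw [← hdecomp, ← (hfin ν hν hνM).2 ε]
    exact (hmin ε hε).2.2 ν hν (hfin ν hν hνM).1
  obtain ⟨m, hm⟩ := hMne
  have hA : ∃ A : ℝ, 0 ≤ A ∧ ∀ ε, 0 < ε → ∫ x, infDist x M ^ 2 ∂(ρmin ε) ≤ ε * A := by
    refine ⟨Eint W (Measure.dirac m), hEnn _, fun ε hε => ?_⟩
    have h1 := hcmp ε hε (Measure.dirac m) inferInstance (by
      rw [Measure.dirac_apply' _ hMc.isClosed.measurableSet.compl]; simp [hm])
    have h2 := hEnn (ρmin ε)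
    have h3 : (1 / ε) * ∫ x, infDist x M ^ 2 ∂(ρmin ε) ≤ Eint W (Measure.dirac m) := by linarith
    rw [one_div, inv_mul_le_iff₀ hε] at h3
    exact h3
  obtain ⟨A, hA0, hA⟩ := hA
  have hdint : ∀ ε, 0 < ε → Integrable (fun x => infDist x M ^ 2) (ρmin ε) := by
    intro ε hε
    have := (hmin ε hε).1
    have hb : Integrable (fun x => 2 * ‖x‖ ^ 2 + 2 * ‖m‖ ^ 2) (ρmin ε) :=
      ((hmin ε hε).2.1.const_mul 2).add (integrable_const _)
    refine hb.mono' ((continuous_infDist_pt M).pow 2).aestronglyMeasurable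
      (Eventually.of_forall fun x => ?_)
    rw [Real.norm_of_nonneg (by positivity)]
    have h1 := infDist_le_dist_of_mem (x := x) hm
    rw [dist_eq_norm] at h1
    have h2 := h1.trans (norm_sub_le x m)
    nlinarith [pow_le_pow_left₀ infDist_nonneg h2 2, sq_nonneg (‖x‖ - ‖m‖)]
  have hL : ∀ ε, 0 < ε → ∫⁻ x, ENNReal.ofReal (2 * infDist x M ^ 2) ∂(ρmin ε)
      ≤ ENNReal.ofReal (2 * (ε * A)) := by
    intro ε hε
    rw [← ofReal_integral_eq_lintegral_ofReal ((hdint ε hε).const_mul 2)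
      (Eventually.of_forall fun x => by positivity), integral_const_mul]
    exact ENNReal.ofReal_le_ofReal (by linarith [hA ε hε])
  let e : ℕ → ℝ := fun n => 1 / ((n : ℝ) + 1)
  have he0 : ∀ n, 0 < e n := fun n => Nat.one_div_pos_of_nat
  have he1 : ∀ n, e n ≤ 1 := fun n => by
    simp only [e]
    rw [div_le_one (by positivity)]
    linarith [(Nat.cast_nonneg n : (0 : ℝ) ≤ n)]
  have het : Tendsto e atTop (𝓝 0) := tendsto_one_div_add_atTop_nhds_zero_nat
  let P : ℕ → ProbabilityMeasure (EuclideanSpace ℝ (Fin d)) := fun n =>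
    ⟨ρmin (e n), (hmin _ (he0 n)).1⟩
  have htight : IsTightMeasureSet
      {((μ : ProbabilityMeasure (EuclideanSpace ℝ (Fin d))) :
        Measure (EuclideanSpace ℝ (Fin d))) | μ ∈ Set.range P} := by
    rw [isTightMeasureSet_iff_exists_isCompact_measure_compl_le]
    intro η hη
    by_cases hηt : η = ⊤
    · exact ⟨∅, isCompact_empty, by simp [hηt]⟩
    have hηr : 0 < η.toReal := ENNReal.toReal_pos hη.ne' hηt
    let q : ℝ := A / η.toReal + 1
    have hq : 0 < q := by positivity
    refine ⟨cthickening (√q) M, hMc.cthickening, ?_⟩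
    rintro _ ⟨_, ⟨n, rfl⟩, rfl⟩
    have hsub : (cthickening (√q) M)ᶜ ⊆
        {x | ENNReal.ofReal (2 * q) ≤ ENNReal.ofReal (2 * infDist x M ^ 2)} := by
      intro x hx
      refine ENNReal.ofReal_le_ofReal ?_
      obtain ⟨z, hz, hz2⟩ := hMc.exists_infDist_eq_dist ⟨m, hm⟩ x
      have h1 : √q ≤ infDist x M := by
        by_contra hlt
        exact hx (mem_cthickening_of_dist_le x z _ M hz (by rw [← hz2]; linarith))
      have := pow_le_pow_left₀ (Real.sqrt_nonneg q) h1 2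
      rw [Real.sq_sqrt hq.le] at this
      linarith
    have hme : Measurable fun x : EuclideanSpace ℝ (Fin d) =>
        ENNReal.ofReal (2 * infDist x M ^ 2) := by
      have := (continuous_infDist_pt M).measurable
      fun_prop
    calc ρmin (e n) (cthickening (√q) M)ᶜ ≤ _ := measure_mono hsub
      _ ≤ _ := meas_ge_le_lintegral_div hme.aemeasurable
          (ENNReal.ofReal_pos.2 (by positivity)).ne' ENNReal.ofReal_ne_top
      _ ≤ η := by
        refine ENNReal.div_le_of_le_mul ((hL _ (he0 n)).trans ?_)
        rw [← ENNReal.ofReal_toReal hηt, ← ENNReal.ofReal_mul hηr.le]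
        refine ENNReal.ofReal_le_ofReal ?_
        have : η.toReal * q = A + η.toReal := by simp only [q]; field_simp
        nlinarith [mul_le_mul_of_nonneg_right (he1 n) hA0]
  obtain ⟨ρs, -, σ, hσ, hconv⟩ := (isCompact_closure_of_isTightMeasureSet htight).tendsto_subseq
    (x := P) (fun n => subset_closure ⟨n, rfl⟩)
  have heσ : Tendsto (fun n => e (σ n)) atTop (𝓝 0) := het.comp hσ.tendsto_atTop
  have hnarrow : ∀ f : EuclideanSpace ℝ (Fin d) → ℝ, Continuous f → (∃ C, ∀ x, |f x| ≤ C) →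
      Tendsto (fun n => ∫ x, f x ∂(ρmin (e (σ n)))) atTop
        (𝓝 (∫ x, f x ∂(ρs : Measure (EuclideanSpace ℝ (Fin d))))) := by
    rintro f hf ⟨C, hC⟩
    exact ProbabilityMeasure.tendsto_iff_forall_integral_tendsto.1 hconv
      (BoundedContinuousFunction.ofNormedAddCommGroup f hf C hC)
  have hsupp : (ρs : Measure (EuclideanSpace ℝ (Fin d))) Mᶜ = 0 := by
    have hcont : Continuous fun x : EuclideanSpace ℝ (Fin d) => min (infDist x M ^ 2) 1 :=
      ((continuous_infDist_pt M).pow 2).min continuous_const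
    have hbd : ∀ x : EuclideanSpace ℝ (Fin d), |min (infDist x M ^ 2) 1| ≤ 1 := fun x => by
      rw [abs_of_nonneg (by positivity)]; exact min_le_right _ _
    have h1 := hnarrow _ hcont ⟨1, hbd⟩
    have h2 : Tendsto (fun n => e (σ n) * A) atTop (𝓝 0) := by simpa using heσ.mul_const A
    have h3 := le_of_tendsto_of_tendsto' h1 h2 (fun n => by
      have := (hmin _ (he0 (σ n))).1
      refine (integral_mono_of_nonneg (Eventually.of_forall fun x => by positivity)
        (hdint _ (he0 (σ n))) (Eventually.of_forall fun x => min_le_left _ _)).trans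
        (hA _ (he0 _)))
    have h4 : ∫ x, min (infDist x M ^ 2) 1 ∂(ρs : Measure (EuclideanSpace ℝ (Fin d))) = 0 :=
      le_antisymm h3 (integral_nonneg fun x => by positivity)
    rw [integral_eq_zero_iff_of_nonneg (fun x => by positivity)
      (Integrable.of_bound hcont.aestronglyMeasurable 1 (Eventually.of_forall hbd))] at h4
    change ∀ᵐ x ∂(ρs : Measure (EuclideanSpace ℝ (Fin d))), x ∈ M
    filter_upwards [h4] with x hx
    rw [hMc.isClosed.mem_iff_infDist_zero ⟨m, hm⟩]
    by_contra hne
    have : 0 < infDist x M := lt_of_le_of_ne infDist_nonneg (Ne.symm hne)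
    have : 0 < min (infDist x M ^ 2) 1 := lt_min (by positivity) one_pos
    exact this.ne' hx
  refine ⟨fun n => e (σ n), fun n => he0 _, heσ, ρs, inferInstance, hsupp, ?_, hnarrow, ?_⟩
  · intro ν hν hνM
    obtain ⟨k, hk⟩ := (hMc.prod hMc).exists_bound_of_continuousOn
      (f := fun p : EuclideanSpace ℝ (Fin d) × EuclideanSpace ℝ (Fin d) => W (p.1 - p.2))
      (by fun_prop)
    have hk0 : 0 ≤ k := (norm_nonneg _).trans (hk (m, m) ⟨hm, hm⟩)
    let Wk : BoundedContinuousFunction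
        (EuclideanSpace ℝ (Fin d) × EuclideanSpace ℝ (Fin d)) ℝ :=
      BoundedContinuousFunction.ofNormedAddCommGroup (fun p => min (W (p.1 - p.2)) k)
        (by fun_prop) k (fun p => by
          rw [Real.norm_of_nonneg (le_min (hW0 _) hk0)]; exact min_le_right _ _)
    have hprod : Tendsto (fun n => (P (σ n)).prod (P (σ n))) atTop (𝓝 (ρs.prod ρs)) :=
      (ProbabilityMeasure.continuous_prod.tendsto (ρs, ρs)).comp (hconv.prodMk_nhds hconv)
    have h1 := ProbabilityMeasure.tendsto_iff_forall_integral_tendsto.1 hprod Wk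
    have h2 := le_of_tendsto' h1 (fun n => by
      have hpr := (hmin _ (he0 (σ n))).1
      show _ ≤ 2 * Eint W ν
      have hi := hWint _ hpr (hmin _ (he0 (σ n))).2.1
      have a1 : ∫ p, Wk p ∂((ρmin (e (σ n))).prod (ρmin (e (σ n)))) ≤
          ∫ p, W (p.1 - p.2) ∂((ρmin (e (σ n))).prod (ρmin (e (σ n)))) :=
        integral_mono_of_nonneg (Eventually.of_forall fun p => le_min (hW0 _) hk0) hi
          (Eventually.of_forall fun p => min_le_left _ _)
      rw [integral_prod _ hi] at a1
      have a2 := hcmp _ (he0 (σ n)) ν hν hνM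
      have a3 : 0 ≤ (1 / e (σ n)) * ∫ x, infDist x M ^ 2 ∂(ρmin (e (σ n))) :=
        mul_nonneg (one_div_nonneg.2 (he0 _).le) (hdnn _)
      have a4 : Eint W (ρmin (e (σ n))) ≤ Eint W ν := by linarith
      refine a1.trans ?_
      unfold Eint at a4 ⊢
      linarith)
    have hae : ∀ᵐ x ∂(ρs : Measure (EuclideanSpace ℝ (Fin d))), x ∈ M := hsupp
    have hiρ := hWint (ρs : Measure (EuclideanSpace ℝ (Fin d))) inferInstance
      (hfin _ inferInstance hsupp).1
    have h3 : ∫ p, Wk p ∂((ρs : Measure (EuclideanSpace ℝ (Fin d))).prod ρs) =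
        ∫ p, W (p.1 - p.2) ∂((ρs : Measure (EuclideanSpace ℝ (Fin d))).prod ρs) := by
      refine integral_congr_ae ?_
      filter_upwards [Measure.quasiMeasurePreserving_fst.ae hae,
        Measure.quasiMeasurePreserving_snd.ae hae] with p hp1 hp2
      exact min_eq_left ((le_abs_self _).trans (hk p ⟨hp1, hp2⟩))
    rw [integral_prod _ hiρ] at h3
    rw [ProbabilityMeasure.toMeasure_prod, h3] at h2
    unfold Eint at h2 ⊢
    linarith
  · refine W2sq_tendsto (fun n => P (σ n)) ρs hconv M hMc ⟨m, hm⟩ hsupp ?_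
    refine tendsto_of_tendsto_of_tendsto_of_le_of_le tendsto_const_nhds
      (h := fun n => ENNReal.ofReal (2 * (e (σ n) * A))) ?_ (fun n => zero_le)
      (fun n => hL _ (he0 _))
    have := (heσ.mul_const A).const_mul 2
    simpa using ENNReal.tendsto_ofReal this

end
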